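/- There is a constant C ≥ 1 depending only on C_d and C_P such that for every u ∈ BV(X) and all Lebesgue points y, z of u with y ≠ z: |u(y) − u(z)| ≤ C·d(y,z)·( M_{2d(y,z)} V(u,·)(y) + M_{2d(y,z)} V(u,·)(z) ), where M_R V(u,·)(w) := sup_{0<ρ≤R} V(u,B(w,ρ))/μ(B(w,ρ)). -/

import Mathlib

open MeasureTheory Metric Filter Set Topology
open scoped NNReal ENNReal

noncomputable section

universe u

/-- The measure `μ` is doubling with constant `Cd`:
`0 < μ(B(x,2r)) ≤ Cd·μ(B(x,r)) < ∞` for every `x` and every `r > 0`. -/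
def IsDoublingWith {X : Type u} [PseudoMetricSpace X] [MeasurableSpace X]
    (μ : Measure X) (Cd : ℝ≥0) : Prop :=
  ∀ (x : X) (r : ℝ), 0 < r →
    0 < μ (ball x (2 * r)) ∧
      μ (ball x (2 * r)) ≤ (Cd : ℝ≥0∞) * μ (ball x r) ∧
      (Cd : ℝ≥0∞) * μ (ball x r) < ⊤

/-- `X` is a geodesic space: any two points are joined by a unit-speed geodesic. -/
def IsGeodesic (X : Type u) [PseudoMetricSpace X] : Prop :=
  ∀ x y : X, ∃ γ : ℝ → X,
    LipschitzOnWith 1 γ (Icc 0 (dist x y)) ∧ γ 0 = x ∧ γ (dist x y) = y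

/-- `g` is an upper gradient of `u`: for every `L ≥ 0` and every `1`-Lipschitz curve
`γ : [0,L] → X`, `|u(γ 0) − u(γ L)| ≤ ∫₀^L g(γ t) dt`. -/
def IsUpperGradientOf {X : Type u} [PseudoMetricSpace X] (g u : X → ℝ) : Prop :=
  ∀ L : ℝ, 0 ≤ L → ∀ γ : ℝ → X, LipschitzOnWith 1 γ (Icc 0 L) →
    |u (γ 0) - u (γ L)| ≤ ∫ t in (0:ℝ)..L, g (γ t)

/-- The lower pointwise Lipschitz constant
`lip u (x) = liminf_{r→0} r⁻¹ sup_{y ∈ B(x,r)} |u y − u x|`. -/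
def lipConst {X : Type u} [PseudoMetricSpace X] (u : X → ℝ) (x : X) : ℝ≥0∞ :=
  Filter.liminf
    (fun r : ℝ => ⨆ y ∈ ball x r, ENNReal.ofReal (|u y - u x| / r)) (𝓝[>] (0:ℝ))

/-- `u` is locally Lipschitz on `W`: Lipschitz on every closed bounded subset of `W`. -/
def LocallyLipschitzOnSet {X : Type u} [PseudoMetricSpace X] (u : X → ℝ) (W : Set X) : Prop :=
  ∀ K : Set X, IsClosed K → Bornology.IsBounded K → K ⊆ W →
    ∃ L : ℝ≥0, LipschitzOnWith L u K

/-- `u i → f` in `L¹_loc(W)`. -/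
def TendstoL1loc {X : Type u} [PseudoMetricSpace X] [MeasurableSpace X]
    (μ : Measure X) (u : ℕ → X → ℝ) (f : X → ℝ) (W : Set X) : Prop :=
  ∀ K : Set X, IsClosed K → Bornology.IsBounded K → K ⊆ W →
    Tendsto (fun i => ∫⁻ x in K, ENNReal.ofReal |u i x - f x| ∂μ) atTop (𝓝 0)

/-- Total variation `V(f,W)` of `f` on an open set `W`:
the infimum over sequences of locally Lipschitz functions converging to `f` in `L¹_loc(W)`
of the liminf of `∫_W lip u_i dμ`. -/
def totVarOn {X : Type u} [PseudoMetricSpace X] [MeasurableSpace X]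
    (μ : Measure X) (f : X → ℝ) (W : Set X) : ℝ≥0∞ :=
  ⨅ (us : ℕ → X → ℝ) (_ : ∀ i, LocallyLipschitzOnSet (us i) W)
    (_ : TendstoL1loc μ us f W),
    Filter.liminf (fun i => ∫⁻ x in W, lipConst (us i) x ∂μ) atTop

/-- Total variation `V(f,A)` of `f` on an arbitrary set `A`:
infimum of `V(f,W)` over open `W ⊇ A`. -/
def totVarSet {X : Type u} [PseudoMetricSpace X] [MeasurableSpace X]
    (μ : Measure X) (f : X → ℝ) (A : Set X) : ℝ≥0∞ :=
  ⨅ (W : Set X) (_ : IsOpen W) (_ : A ⊆ W), totVarOn μ f W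

/-- `f` is of bounded variation: locally integrable and `V(f,X) < ∞`. -/
def IsBV {X : Type u} [MetricSpace X] [MeasurableSpace X]
    (μ : Measure X) (f : X → ℝ) : Prop :=
  LocallyIntegrable f μ ∧ totVarOn μ f Set.univ < ⊤

/-- `(X,d,μ)` supports a `1`-Poincaré inequality with constant `CP`. -/
def SupportsPoincare {X : Type u} [MetricSpace X] [MeasurableSpace X]
    (μ : Measure X) (CP : ℝ) : Prop :=
  ∀ u : X → ℝ, LocallyLipschitzOnSet u Set.univ →
    ∀ g : X → ℝ, (∀ x, 0 ≤ g x) → Measurable g → IsUpperGradientOf g u →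
      ∀ (x : X) (r : ℝ), 0 < r →
        (⨍ y in ball x r, |u y - (⨍ z in ball x r, u z ∂μ)| ∂μ) ≤
          CP * r * (⨍ y in ball x r, g y ∂μ)

/-- Standing assumptions: a complete geodesic metric measure space with at least two
points, whose measure is doubling and supports a 1-Poincaré inequality. -/
def GoodSpace (X : Type u) [MetricSpace X] [MeasurableSpace X]
    (μ : Measure X) (Cd : ℝ≥0) (CP : ℝ) : Prop :=
  Nontrivial X ∧ CompleteSpace X ∧ IsGeodesic X ∧
    IsDoublingWith μ Cd ∧ SupportsPoincare μ CP

/-- The codimension-1 Hausdorff measure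
`𝓗(A) = sup_{δ>0} inf { Σ μ(B_i)/r_i : 0 < r_i ≤ δ, A ⊆ ⋃ B_i }`,
the infimum over countable coverings of `A` by balls (balls of nonpositive radius
are empty and contribute `0`). -/
def codimOneH {X : Type u} [PseudoMetricSpace X] [MeasurableSpace X]
    (μ : Measure X) (A : Set X) : ℝ≥0∞ :=
  ⨆ (δ : ℝ) (_ : 0 < δ),
    ⨅ (c : ℕ → X) (r : ℕ → ℝ) (_ : ∀ i, r i ≤ δ)
      (_ : A ⊆ ⋃ i, ball (c i) (r i)),
      ∑' i, if 0 < r i then μ (ball (c i) (r i)) / ENNReal.ofReal (r i) else 0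

/-- The measure theoretic boundary `∂*E`. -/
def measBdry {X : Type u} [PseudoMetricSpace X] [MeasurableSpace X]
    (μ : Measure X) (E : Set X) : Set X :=
  {x : X |
    0 < Filter.limsup (fun r : ℝ => μ (E ∩ ball x r) / μ (ball x r)) (𝓝[>] (0:ℝ)) ∧
    0 < Filter.limsup (fun r : ℝ => μ (Eᶜ ∩ ball x r) / μ (ball x r)) (𝓝[>] (0:ℝ))}

/-- `A` has density `0` at `x`. -/
def DensityZeroAt {X : Type u} [PseudoMetricSpace X] [MeasurableSpace X]
    (μ : Measure X) (A : Set X) (x : X) : Prop :=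
  Tendsto (fun r : ℝ => μ (A ∩ ball x r) / μ (ball x r)) (𝓝[>] (0:ℝ)) (𝓝 0)

/-- `A` has density `1` at `x`. -/
def DensityOneAt {X : Type u} [PseudoMetricSpace X] [MeasurableSpace X]
    (μ : Measure X) (A : Set X) (x : X) : Prop :=
  Tendsto (fun r : ℝ => μ (A ∩ ball x r) / μ (ball x r)) (𝓝[>] (0:ℝ)) (𝓝 1)

/-- `x` is a Lebesgue point of `u`. -/
def LebesguePointOf {X : Type u} [MetricSpace X] [MeasurableSpace X]
    (μ : Measure X) (u : X → ℝ) (x : X) : Prop :=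
  Tendsto (fun r : ℝ => ⨍ y in ball x r, |u y - u x| ∂μ) (𝓝[>] (0:ℝ)) (𝓝 0)

/-- `u` is a Borel representative whose value at each Lebesgue point equals the limit
of its ball averages. -/
def PreciseRep {X : Type u} [MetricSpace X] [MeasurableSpace X]
    (μ : Measure X) (u : X → ℝ) : Prop :=
  Measurable u ∧ ∀ (x : X) (c : ℝ),
    Tendsto (fun r : ℝ => ⨍ y in ball x r, u y ∂μ) (𝓝[>] (0:ℝ)) (𝓝 c) → u x = c

/-- The restricted maximal function `M_R ν (x) = sup_{0<r≤R} ν(B(x,r))/μ(B(x,r))`. -/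
def restrMaximal {X : Type u} [PseudoMetricSpace X] [MeasurableSpace X]
    (μ ν : Measure X) (R : ℝ) (x : X) : ℝ≥0∞ :=
  ⨆ (r : ℝ) (_ : 0 < r) (_ : r ≤ R), ν (ball x r) / μ (ball x r)

/-- `F_g(x,y)`: the infimum of `∫_γ g ds` over 1-Lipschitz curves `γ : [0,L] → Z`
joining `x` to `y` (the infimum over the empty set is `∞`). -/
def curveInf {Z : Type u} [PseudoMetricSpace Z] (g : Z → ℝ) (x y : Z) : ℝ≥0∞ :=
  ⨅ (L : ℝ) (_ : 0 ≤ L) (γ : ℝ → Z) (_ : LipschitzOnWith 1 γ (Icc 0 L))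
    (_ : γ 0 = x) (_ : γ L = y),
    ∫⁻ t in Icc (0:ℝ) L, ENNReal.ofReal (g (γ t))

/-- Weak-star convergence of measures: test against continuous, compactly
supported functions. -/
def WeakStar {Z : Type u} [MetricSpace Z] [MeasurableSpace Z]
    (ν : ℕ → Measure Z) (m : Measure Z) : Prop :=
  ∀ φ : Z → ℝ, Continuous φ → HasCompactSupport φ →
    Tendsto (fun n => ∫ x, φ x ∂(ν n)) atTop (𝓝 (∫ x, φ x ∂m))

/-- `φ ∈ BV_c(U)`: a BV function whose support is compact and contained in `U`. -/
def MemBVc {X : Type u} [MetricSpace X] [MeasurableSpace X]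
    (μ : Measure X) (φ : X → ℝ) (U : Set X) : Prop :=
  IsBV μ φ ∧ IsCompact (tsupport φ) ∧ tsupport φ ⊆ U

/-!
For a Lipschitz function `v`, `lip v` is an upper gradient of `v`, so approximation turns the
Poincaré inequality into a bound for the mean oscillation of a BV function `u` over a ball by
`V(u,·)` of a slightly larger concentric ball. By doubling, the averages of `u` over comparable
balls of radius about `r` then differ by at most a multiple of `r` times the maximal function of
`V(u,·)`. At a Lebesgue point, summing this over the balls of radius `r / 2 ^ n` gives a geometric
series, which bounds the distance from `u y` to the average over `B(y, r)`. With `d = d(y, z)`, the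
points `y` and `z` are linked by the inclusion `B(z, d / 2) ⊆ B(y, 3 * d / 2)`; the radius
`3 * d / 2` leaves room below `2 * d` for the enlarged ball.
-/

section Average

variable {α E : Type*} [MeasurableSpace α] {μ : Measure α} [NormedAddCommGroup E]
  [NormedSpace ℝ E] {f g : α → E} {A B : Set α}

theorem edist_average_average_le (hf : Integrable f μ) (hg : Integrable g μ) :
    edist (⨍ x, f x ∂μ) (⨍ x, g x ∂μ) ≤ ⨍⁻ x, edist (f x) (g x) ∂μ := by
  simp only [edist_eq_enorm_sub, average, laverage]
  rw [← integral_sub hf.to_average hg.to_average]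
  exact enorm_integral_le_lintegral_enorm _

theorem edist_setAverage_setAverage_le (hf : IntegrableOn f A μ) (hg : IntegrableOn g A μ) :
    edist (⨍ x in A, f x ∂μ) (⨍ x in A, g x ∂μ) ≤ (∫⁻ x in A, edist (f x) (g x) ∂μ) / μ A :=
  (edist_average_average_le hf hg).trans_eq (setLAverage_eq _ _ _)

theorem edist_setAverage_const_le [CompleteSpace E] (hA₀ : μ A ≠ 0) (hA : μ A ≠ ⊤)
    (hf : IntegrableOn f A μ) (c : E) :
    edist (⨍ x in A, f x ∂μ) c ≤ (∫⁻ x in A, edist (f x) c ∂μ) / μ A := by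
  simpa only [setAverage_const hA₀ hA] using
    edist_setAverage_setAverage_le hf (integrableOn_const hA (C := c))

theorem edist_setAverage_setAverage_le_of_subset [CompleteSpace E] (hAB : A ⊆ B) (hA : μ A ≠ 0)
    (hB : μ B ≠ ⊤) (hf : IntegrableOn f B μ) :
    edist (⨍ x in A, f x ∂μ) (⨍ x in B, f x ∂μ) ≤
      (∫⁻ x in B, edist (f x) (⨍ y in B, f y ∂μ) ∂μ) / μ A := by
  refine (edist_setAverage_const_le hA (measure_ne_top_of_subset hAB hB) (hf.mono_set hAB) _).trans
    ?_
  gcongr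

theorem lintegral_edist_setAverage_le (hf : IntegrableOn f B μ) (hg : IntegrableOn g B μ) :
    ∫⁻ x in B, edist (f x) (⨍ y in B, f y ∂μ) ∂μ ≤
      ∫⁻ x in B, edist (g x) (⨍ y in B, g y ∂μ) ∂μ + 2 * ∫⁻ x in B, edist (g x) (f x) ∂μ := by
  set D := ∫⁻ x in B, edist (g x) (f x) ∂μ
  have hD : edist (⨍ y in B, g y ∂μ) (⨍ y in B, f y ∂μ) * μ B ≤ D :=
    ENNReal.mul_le_of_le_div (edist_setAverage_setAverage_le hg hf)
  calc ∫⁻ x in B, edist (f x) (⨍ y in B, f y ∂μ) ∂μ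
      ≤ ∫⁻ x in B, (edist (g x) (f x) + edist (g x) (⨍ y in B, g y ∂μ) +
          edist (⨍ y in B, g y ∂μ) (⨍ y in B, f y ∂μ)) ∂μ := by
        gcongr with x
        rw [edist_comm (g x) (f x)]
        exact edist_triangle4 _ _ _ _
    _ = D + ∫⁻ x in B, edist (g x) (⨍ y in B, g y ∂μ) ∂μ +
          edist (⨍ y in B, g y ∂μ) (⨍ y in B, f y ∂μ) * μ B := by
        rw [lintegral_add_right _ measurable_const, setLIntegral_const,
          lintegral_add_left' (hg.1.edist hf.1)]
    _ ≤ D + ∫⁻ x in B, edist (g x) (⨍ y in B, g y ∂μ) ∂μ + D := by gcongr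
    _ = _ := by ring

end Average

section PointwiseLipschitz

variable {X : Type*} [PseudoMetricSpace X] {v w : X → ℝ} {x : X}

/-- The difference quotient `r⁻¹ sup_{y ∈ B(x,r)} |v y − v x|` whose lower limit as `r → 0` is the
pointwise Lipschitz constant `lipConst v x`. -/
def ballSlope (v : X → ℝ) (x : X) (r : ℝ) : ℝ≥0∞ :=
  ⨆ y ∈ ball x r, ENNReal.ofReal (|v y - v x| / r)

theorem ofReal_abs_div_le_ballSlope {y : X} {r : ℝ} (hy : y ∈ ball x r) :
    ENNReal.ofReal (|v y - v x| / r) ≤ ballSlope v x r :=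
  le_iSup₂ (f := fun y (_ : y ∈ ball x r) => ENNReal.ofReal (|v y - v x| / r)) y hy

theorem ballSlope_le_of_lipschitzWith {K : ℝ≥0} (hv : LipschitzWith K v) {r : ℝ} (hr : 0 < r) :
    ballSlope v x r ≤ K := by
  refine iSup₂_le fun y hy => ?_
  rw [← ENNReal.ofReal_coe_nnreal]
  refine ENNReal.ofReal_le_ofReal ((div_le_iff₀ hr).2 ?_)
  calc |v y - v x| ≤ K * dist y x := hv.dist_le_mul y x
    _ ≤ K * r := by gcongr; exact (mem_ball.1 hy).le

theorem ofReal_mul_ballSlope_mono {q r : ℝ} (hq : 0 < q) (hqr : q ≤ r) :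
    ENNReal.ofReal q * ballSlope v x q ≤ ENNReal.ofReal r * ballSlope v x r := by
  have key : ∀ {s : ℝ}, 0 < s → ENNReal.ofReal s * ballSlope v x s =
      ⨆ y ∈ ball x s, ENNReal.ofReal |v y - v x| := fun hs => by
    simp only [ballSlope, ENNReal.mul_iSup, ← ENNReal.ofReal_mul hs.le, mul_div_cancel₀ _ hs.ne']
  rw [key hq, key (hq.trans_le hqr)]
  exact biSup_mono fun y hy => ball_subset_ball hqr hy

theorem lipConst_le_of_lipschitzWith {K : ℝ≥0} (hv : LipschitzWith K v) : lipConst v x ≤ K := by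
  refine (liminf_le_liminf ?_).trans (liminf_const (K : ℝ≥0∞)).le
  filter_upwards [self_mem_nhdsWithin] with r hr using ballSlope_le_of_lipschitzWith hv hr

theorem lipConst_congr (h : v =ᶠ[𝓝 x] w) : lipConst v x = lipConst w x := by
  obtain ⟨δ, hδ, hvw⟩ := Metric.eventually_nhds_iff_ball.1 h
  refine liminf_congr ?_
  filter_upwards [Ioo_mem_nhdsGT hδ] with r hr
  refine biSup_congr fun y hy => ?_
  rw [hvw y (ball_subset_ball hr.2.le hy), hvw x (mem_ball_self hδ)]

/-- Rational radii suffice because `r * ballSlope v x r` is monotone in `r`. -/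
theorem lipConst_eq_liminf_rat (v : X → ℝ) (x : X) :
    lipConst v x = liminf (fun q : ℚ => ballSlope v x q) (𝓝[>] 0) := by
  apply le_antisymm
  · have hcast : Tendsto ((↑) : ℚ → ℝ) (𝓝[>] 0) (𝓝[>] 0) :=
      tendsto_nhdsWithin_iff.2
        ⟨by simpa using (Rat.continuous_coe_real.tendsto 0).mono_left nhdsWithin_le_nhds,
          by filter_upwards [self_mem_nhdsWithin] with q hq using (Rat.cast_pos (K := ℝ)).2 hq⟩
    exact liminf_le_liminf_of_le hcast
  · refine le_of_forall_lt_imp_le_of_dense fun a ha => ?_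
    obtain ⟨ε, hε, hlt⟩ := mem_nhdsGT_iff_exists_Ioo_subset.1 (eventually_lt_of_lt_liminf ha)
    refine le_liminf_of_le (by isBoundedDefault) ?_
    filter_upwards [Ioo_mem_nhdsGT (Rat.cast_pos.2 hε)] with r ⟨hr₀, hrε⟩
    obtain ⟨q, -, hqr, hq⟩ := Real.exists_seq_rat_strictMono_tendsto r
    have hmul : ENNReal.ofReal r * a ≤ ENNReal.ofReal r * ballSlope v x r := by
      refine le_of_tendsto (ENNReal.Tendsto.mul_const (ENNReal.tendsto_ofReal hq)
        (.inr ha.ne_top)) ?_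
      filter_upwards [hq.eventually_const_lt hr₀] with n hn
      refine le_trans ?_ (ofReal_mul_ballSlope_mono hn (hqr n).le)
      gcongr
      exact (hlt ⟨Rat.cast_pos.1 hn, by exact_mod_cast (hqr n).trans hrε⟩).le
    exact (ENNReal.mul_le_mul_iff_right (ENNReal.ofReal_pos.2 hr₀).ne' ENNReal.ofReal_ne_top).1
      hmul

theorem lowerSemicontinuous_ballSlope (hv : Continuous v) (r : ℝ) :
    LowerSemicontinuous fun x => ballSlope v x r := by
  refine lowerSemicontinuous_iff_isOpen_preimage.2 fun a => ?_
  have hpre : (fun x => ballSlope v x r) ⁻¹' Ioi a =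
      ⋃ y, {x | dist y x < r} ∩ {x | a < ENNReal.ofReal (|v y - v x| / r)} := by
    ext x
    simp [ballSlope, lt_iSup_iff]
  rw [hpre]
  exact isOpen_iUnion fun y => (isOpen_lt (by fun_prop) continuous_const).inter
    (isOpen_lt continuous_const (ENNReal.continuous_ofReal.comp (by fun_prop)))

theorem measurable_lipConst [MeasurableSpace X] [BorelSpace X] (hv : Continuous v) :
    Measurable (lipConst v) := by
  obtain ⟨s, hs⟩ := (𝓝[>] (0 : ℚ)).exists_antitone_basis
  simp only [funext (lipConst_eq_liminf_rat v)]
  exact .liminf' (fun q => (lowerSemicontinuous_ballSlope hv q).measurable)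
    ⟨hs.1, to_countable _⟩ fun _ => to_countable _

theorem ofReal_abs_deriv_comp_le_lipConst {γ : ℝ → X} {L t : ℝ}
    (hγ : LipschitzOnWith 1 γ (Icc 0 L)) (ht : t ∈ Ioo 0 L)
    (hd : DifferentiableAt ℝ (v ∘ γ) t) :
    ENNReal.ofReal |deriv (v ∘ γ) t| ≤ lipConst v (γ t) := by
  have hslope : Tendsto (fun h : ℝ => |h⁻¹ * (v (γ (t + h)) - v (γ t))|) (𝓝[>] 0)
      (𝓝 |deriv (v ∘ γ) t|) :=
    ((hasDerivAt_iff_tendsto_slope_zero.1 hd.hasDerivAt).mono_left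
      (nhdsWithin_mono _ fun _ => ne_of_gt)).abs
  -- The balls are open, so a step of length `c * r` with `c < 1` is needed to stay in `B(γ t, r)`.
  have hc : ∀ c ∈ Ioo (0 : ℝ) 1, ENNReal.ofReal (c * |deriv (v ∘ γ) t|) ≤ lipConst v (γ t) := by
    intro c ⟨hc₀, hc₁⟩
    have hcr : Tendsto (fun r : ℝ => c * r) (𝓝[>] 0) (𝓝[>] 0) :=
      tendsto_nhdsWithin_iff.2
        ⟨by simpa using ((continuous_const_mul c).tendsto 0).mono_left nhdsWithin_le_nhds,
          by filter_upwards [self_mem_nhdsWithin] with r hr using mul_pos hc₀ hr⟩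
    rw [← (ENNReal.tendsto_ofReal ((hslope.comp hcr).const_mul c)).liminf_eq]
    refine liminf_le_liminf ?_
    filter_upwards [Ioo_mem_nhdsGT (sub_pos.2 ht.2)] with r ⟨hr₀, hrL⟩
    have hstep : c * r < r := mul_lt_of_lt_one_left hr₀ hc₁
    have hpos : 0 < c * r := mul_pos hc₀ hr₀
    have hmem : γ (t + c * r) ∈ ball (γ t) r := by
      have := hγ.dist_le_mul (t + c * r) ⟨by linarith [ht.1], by linarith⟩ t
        (Ioo_subset_Icc_self ht)
      rw [Real.dist_eq, add_sub_cancel_left, abs_of_pos hpos, NNReal.coe_one, one_mul] at this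
      exact this.trans_lt hstep
    refine le_of_eq_of_le ?_ (ofReal_abs_div_le_ballSlope hmem)
    rw [Function.comp_apply, abs_mul, abs_inv, abs_of_pos hpos]
    field_simp
  have hlim : Tendsto (fun c : ℝ => ENNReal.ofReal (c * |deriv (v ∘ γ) t|)) (𝓝[<] 1)
      (𝓝 (ENNReal.ofReal |deriv (v ∘ γ) t|)) := by
    have : Continuous fun c : ℝ => ENNReal.ofReal (c * |deriv (v ∘ γ) t|) :=
      ENNReal.continuous_ofReal.comp (by fun_prop)
    simpa using (this.tendsto 1).mono_left nhdsWithin_le_nhds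
  exact le_of_tendsto hlim (by filter_upwards [Ioo_mem_nhdsLT zero_lt_one] using hc)

theorem isUpperGradientOf_lipConst [MeasurableSpace X] [BorelSpace X] {K : ℝ≥0}
    (hv : LipschitzWith K v) : IsUpperGradientOf (fun x => (lipConst v x).toReal) v := by
  intro L hL γ hγ
  have hle : ∀ x, lipConst v x ≤ K := fun _ => lipConst_le_of_lipschitzWith hv
  have hac : AbsolutelyContinuousOnInterval (v ∘ γ) 0 L :=
    (uIcc_of_le hL ▸ hv.comp_lipschitzOnWith hγ).absolutelyContinuousOnInterval
  have hint : IntervalIntegrable (fun t => (lipConst v (γ t)).toReal) volume 0 L := by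
    rw [intervalIntegrable_iff_integrableOn_Ioc_of_le hL]
    have hγm : AEMeasurable γ (volume.restrict (Ioc 0 L)) :=
      (hγ.continuousOn.mono Ioc_subset_Icc_self).aemeasurable measurableSet_Ioc
    refine Integrable.of_bound ((measurable_lipConst hv.continuous).ennreal_toReal.comp_aemeasurable
      hγm).aestronglyMeasurable K (Eventually.of_forall fun t => ?_)
    rw [Real.norm_of_nonneg ENNReal.toReal_nonneg]
    exact ENNReal.toReal_mono ENNReal.coe_ne_top (hle _)
  rw [abs_sub_comm, ← Real.norm_eq_abs]
  change ‖(v ∘ γ) L - (v ∘ γ) 0‖ ≤ _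
  rw [← hac.integral_deriv_eq_sub]
  refine intervalIntegral.norm_integral_le_of_norm_le hL ?_ hint
  filter_upwards [hac.ae_differentiableAt, Measure.ae_ne volume L] with t hdiff htL ht
  have htI : t ∈ Ioo 0 L := ⟨ht.1, ht.2.lt_of_ne htL⟩
  rw [Real.norm_eq_abs,
    ← ENNReal.ofReal_le_iff_le_toReal (ne_top_of_le_ne_top ENNReal.coe_ne_top (hle _))]
  exact ofReal_abs_deriv_comp_le_lipConst hγ htI
    (hdiff (uIcc_of_le hL ▸ Ioo_subset_Icc_self htI))

end PointwiseLipschitz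

section Doubling

variable {X : Type*} [PseudoMetricSpace X] [MeasurableSpace X]

theorem secondCountableTopology_of_isOpenPosMeasure [OpensMeasurableSpace X] (μ : Measure X)
    [SFinite μ] [μ.IsOpenPosMeasure] : SecondCountableTopology X := by
  refine Metric.secondCountable_of_almost_dense_set fun ε hε => ?_
  obtain ⟨s, -, hdisj, hcover⟩ := Vitali.exists_disjoint_subfamily_covering_enlargement_closedBall
    univ (id : X → X) (fun _ => ε / 4) (ε / 4) (fun _ _ => le_rfl) 4 (by norm_num)
  refine ⟨s, ?_, fun x => ?_⟩
  · have hcount := Measure.countable_meas_pos_of_disjoint_iUnion (μ := μ)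
      (As := fun a : s => closedBall (a : X) (ε / 4)) (fun _ => measurableSet_closedBall)
      ((pairwise_subtype_iff_pairwise_set _ _).2 hdisj)
    have hpos : {a : s | 0 < μ (closedBall (a : X) (ε / 4))} = univ :=
      eq_univ_of_forall fun a => measure_closedBall_pos μ _ (by positivity)
    rw [hpos] at hcount
    exact countable_coe_iff.1 (countable_univ_iff.1 hcount)
  · obtain ⟨y, hy, hxy⟩ := hcover x (mem_univ x)
    refine ⟨y, hy, ?_⟩
    simpa only [id_eq, mem_closedBall, mul_div_cancel₀ ε four_ne_zero] using
      hxy (mem_closedBall_self (by positivity))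

namespace IsDoublingWith

variable {μ : Measure X} {Cd : ℝ≥0} (hD : IsDoublingWith μ Cd)
include hD

theorem measure_ball_pos (x : X) {r : ℝ} (hr : 0 < r) : 0 < μ (ball x r) := by
  simpa only [mul_div_cancel₀ r two_ne_zero] using (hD x (r / 2) (half_pos hr)).1

theorem measure_ball_lt_top (x : X) (r : ℝ) : μ (ball x r) < ⊤ := by
  rcases le_or_gt r 0 with hr | hr
  · simp only [ball_eq_empty.2 hr, measure_empty, ENNReal.zero_lt_top]
  · obtain ⟨hpos, hle, hfin⟩ := hD x r hr
    exact ENNReal.lt_top_of_mul_ne_top_right hfin.ne (left_ne_zero_of_mul (hpos.trans_le hle).ne')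

theorem measure_ball_two_pow_mul_le (x : X) {r : ℝ} (hr : 0 < r) (n : ℕ) :
    μ (ball x (2 ^ n * r)) ≤ Cd ^ n * μ (ball x r) := by
  induction n with
  | zero => simp only [pow_zero, one_mul, le_refl]
  | succ n ih =>
    calc μ (ball x (2 ^ (n + 1) * r)) = μ (ball x (2 * (2 ^ n * r))) := by ring_nf
      _ ≤ Cd * μ (ball x (2 ^ n * r)) := (hD x _ (by positivity)).2.1
      _ ≤ Cd * (Cd ^ n * μ (ball x r)) := by gcongr
      _ = Cd ^ (n + 1) * μ (ball x r) := by ring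

theorem isOpenPosMeasure : μ.IsOpenPosMeasure := by
  refine ⟨fun U hU ⟨x, hx⟩ => ?_⟩
  obtain ⟨r, hr, hrU⟩ := Metric.isOpen_iff.1 hU x hx
  exact ((hD.measure_ball_pos x hr).trans_le (measure_mono hrU)).ne'

theorem sigmaFinite : SigmaFinite μ := by
  rcases isEmpty_or_nonempty X with _ | ⟨⟨x₀⟩⟩
  · rw [Measure.eq_zero_of_isEmpty μ]
    infer_instance
  · exact ⟨⟨⟨fun n => ball x₀ n, fun _ => trivial, fun n => hD.measure_ball_lt_top x₀ n,
      iUnion_ball_nat x₀⟩⟩⟩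

theorem secondCountableTopology [OpensMeasurableSpace X] : SecondCountableTopology X :=
  have := hD.isOpenPosMeasure
  have := hD.sigmaFinite
  secondCountableTopology_of_isOpenPosMeasure μ

end IsDoublingWith

end Doubling

section LocallyLipschitz

variable {X : Type*} [PseudoMetricSpace X] {v : X → ℝ} {W : Set X} {x : X} {r : ℝ}

theorem locallyLipschitzOnSet_of_lipschitzWith {K : ℝ≥0} (hv : LipschitzWith K v) :
    LocallyLipschitzOnSet v W :=
  fun _ _ _ _ => ⟨K, hv.lipschitzOnWith⟩

namespace LocallyLipschitzOnSet

variable (hv : LocallyLipschitzOnSet v W) (hW : closedBall x r ⊆ W)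
include hv hW

theorem exists_lipschitzWith_eqOn_closedBall :
    ∃ (K : ℝ≥0) (w : X → ℝ), LipschitzWith K w ∧ EqOn v w (closedBall x r) :=
  have ⟨K, hK⟩ := hv _ isClosed_closedBall isBounded_closedBall hW
  ⟨K, hK.extend_real⟩

theorem integrableOn_ball [MeasurableSpace X] [OpensMeasurableSpace X] {μ : Measure X}
    (hB : μ (ball x r) ≠ ⊤) : IntegrableOn v (ball x r) μ := by
  obtain ⟨K, hK⟩ := hv _ isClosed_closedBall isBounded_closedBall hW
  have hK' := hK.mono ball_subset_closedBall
  refine .of_bound hB.lt_top (hK'.continuousOn.aestronglyMeasurable measurableSet_ball)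
    (|v x| + K * r) ?_
  filter_upwards [ae_restrict_mem measurableSet_ball] with y hy
  calc |v y| ≤ |v x| + |v y - v x| := by linarith [abs_sub_abs_le_abs_sub (v y) (v x)]
    _ ≤ |v x| + K * dist y x := by
      gcongr
      exact hK'.dist_le_mul y hy x (mem_ball_self (pos_of_mem_ball hy))
    _ ≤ |v x| + K * r := by gcongr; exact (mem_ball.1 hy).le

end LocallyLipschitzOnSet

end LocallyLipschitz

section Poincare

variable {X : Type*} [MetricSpace X] [MeasurableSpace X] [BorelSpace X] {μ : Measure X}
  {CP : ℝ} {u v : X → ℝ} {x : X} {r : ℝ}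

theorem IsBV.integrableOn_ball [SecondCountableTopology X] (hu : IsBV μ u)
    (hB : μ (ball x r) ≠ ⊤) : IntegrableOn u (ball x r) μ := by
  obtain ⟨us, hus⟩ := iInf_lt_iff.1 hu.2
  obtain ⟨hlip, hus⟩ := iInf_lt_iff.1 hus
  obtain ⟨hconv, -⟩ := iInf_lt_iff.1 hus
  obtain ⟨i, hi⟩ := ((hconv (closedBall x r) isClosed_closedBall isBounded_closedBall
    (subset_univ _)).eventually_lt_const zero_lt_one).exists
  have hui : IntegrableOn (us i) (ball x r) μ := (hlip i).integrableOn_ball (subset_univ _) hB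
  have hdiff : IntegrableOn (us i - u) (ball x r) μ := by
    refine ⟨hui.1.sub hu.1.aestronglyMeasurable.restrict, ?_⟩
    rw [hasFiniteIntegral_iff_norm]
    exact (lintegral_mono_set ball_subset_closedBall).trans_lt (hi.trans ENNReal.one_lt_top)
  simpa only [sub_sub_cancel] using hui.sub hdiff

namespace SupportsPoincare

variable (hP : SupportsPoincare μ CP)
include hP

theorem lintegral_edist_setAverage_le_of_lipschitzWith {K : ℝ≥0} (hv : LipschitzWith K v)
    (hr : 0 < r) (hB : μ (ball x r) ≠ ⊤) :
    ∫⁻ y in ball x r, edist (v y) (⨍ z in ball x r, v z ∂μ) ∂μ ≤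
      ENNReal.ofReal (CP * r) * ∫⁻ y in ball x r, lipConst v y ∂μ := by
  have hloc : LocallyLipschitzOnSet v univ := locallyLipschitzOnSet_of_lipschitzWith hv
  have hmeas : Measurable fun y => (lipConst v y).toReal :=
    (measurable_lipConst hv.continuous).ennreal_toReal
  have hle : ∀ y, lipConst v y ≤ K := fun _ => lipConst_le_of_lipschitzWith hv
  have hint : IntegrableOn (fun y => (lipConst v y).toReal) (ball x r) μ :=
    .of_bound hB.lt_top hmeas.aestronglyMeasurable K (Eventually.of_forall fun y => by
      rw [Real.norm_of_nonneg ENNReal.toReal_nonneg]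
      exact ENNReal.toReal_mono ENNReal.coe_ne_top (hle y))
  have hosc : IntegrableOn (fun y => |v y - ⨍ z in ball x r, v z ∂μ|) (ball x r) μ :=
    ((hloc.integrableOn_ball (subset_univ _) hB).sub (integrableOn_const hB)).abs
  calc ∫⁻ y in ball x r, edist (v y) (⨍ z in ball x r, v z ∂μ) ∂μ
      = ENNReal.ofReal (∫ y in ball x r, |v y - ⨍ z in ball x r, v z ∂μ| ∂μ) := by
        rw [ofReal_integral_eq_lintegral_ofReal hosc (Eventually.of_forall fun _ => abs_nonneg _)]
        simp only [edist_dist, Real.dist_eq]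
    _ ≤ ENNReal.ofReal (CP * r * ∫ y in ball x r, (lipConst v y).toReal ∂μ) := by
        rw [← measure_smul_setAverage _ hB, ← measure_smul_setAverage (fun y => _) hB, smul_eq_mul,
          smul_eq_mul, mul_left_comm]
        gcongr
        exact hP v hloc _ (fun _ => ENNReal.toReal_nonneg) hmeas (isUpperGradientOf_lipConst hv) x
          r hr
    _ = ENNReal.ofReal (CP * r) * ∫⁻ y in ball x r, lipConst v y ∂μ := by
        rw [ENNReal.ofReal_mul' (integral_nonneg fun _ => ENNReal.toReal_nonneg),
          ofReal_integral_eq_lintegral_ofReal hint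
            (Eventually.of_forall fun _ => ENNReal.toReal_nonneg)]
        simp only [ENNReal.ofReal_toReal (ne_top_of_le_ne_top ENNReal.coe_ne_top (hle _))]

theorem lintegral_edist_setAverage_le_of_locallyLipschitzOnSet {W : Set X}
    (hv : LocallyLipschitzOnSet v W) (hW : closedBall x r ⊆ W) (hr : 0 < r)
    (hB : μ (ball x r) ≠ ⊤) :
    ∫⁻ y in ball x r, edist (v y) (⨍ z in ball x r, v z ∂μ) ∂μ ≤
      ENNReal.ofReal (CP * r) * ∫⁻ y in ball x r, lipConst v y ∂μ := by
  obtain ⟨K, w, hw, hvw⟩ := hv.exists_lipschitzWith_eqOn_closedBall hW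
  have hvw' : EqOn v w (ball x r) := hvw.mono ball_subset_closedBall
  have hlip : EqOn (lipConst v) (lipConst w) (ball x r) := fun y hy =>
    lipConst_congr (hvw'.eventuallyEq_of_mem (isOpen_ball.mem_nhds hy))
  rw [setLIntegral_congr_fun measurableSet_ball hlip,
    setAverage_congr_fun measurableSet_ball (Eventually.of_forall hvw'),
    setLIntegral_congr_fun measurableSet_ball fun y hy => congrArg (edist · _) (hvw' hy)]
  exact hP.lintegral_edist_setAverage_le_of_lipschitzWith hw hr hB

theorem lintegral_edist_setAverage_le_totVarOn (hCP : 0 < CP) (hr : 0 < r) {ρ : ℝ} (hρ : r < ρ)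
    (hB : μ (ball x r) ≠ ⊤) (hu : IntegrableOn u (ball x r) μ) :
    ∫⁻ y in ball x r, edist (u y) (⨍ z in ball x r, u z ∂μ) ∂μ ≤
      ENNReal.ofReal (CP * r) * totVarOn μ u (ball x ρ) := by
  have hc₀ : ENNReal.ofReal (CP * r) ≠ 0 := (ENNReal.ofReal_pos.2 (by positivity)).ne'
  have hsub : closedBall x r ⊆ ball x ρ := closedBall_subset_ball hρ
  rw [← ENNReal.div_le_iff' hc₀ ENNReal.ofReal_ne_top]
  refine le_iInf fun us => le_iInf₂ fun hlip hconv => ?_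
  rw [ENNReal.div_le_iff' hc₀ ENNReal.ofReal_ne_top,
    ← ENNReal.liminf_const_mul_of_ne_top ENNReal.ofReal_ne_top]
  have herr : Tendsto (fun i => 2 * ∫⁻ y in closedBall x r, edist (us i y) (u y) ∂μ) atTop
      (𝓝 0) := by
    simpa only [edist_dist, Real.dist_eq, mul_zero] using ENNReal.Tendsto.const_mul
      (hconv _ isClosed_closedBall isBounded_closedBall hsub) (.inr ENNReal.ofNat_ne_top)
  rw [← ENNReal.liminf_add_of_right_tendsto_zero herr]
  refine le_liminf_of_le (by isBoundedDefault) (Eventually.of_forall fun i => ?_)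
  have hui : IntegrableOn (us i) (ball x r) μ := (hlip i).integrableOn_ball hsub hB
  calc ∫⁻ y in ball x r, edist (u y) (⨍ z in ball x r, u z ∂μ) ∂μ
      ≤ ∫⁻ y in ball x r, edist (us i y) (⨍ z in ball x r, us i z ∂μ) ∂μ +
          2 * ∫⁻ y in ball x r, edist (us i y) (u y) ∂μ := lintegral_edist_setAverage_le hu hui
    _ ≤ ENNReal.ofReal (CP * r) * ∫⁻ y in ball x r, lipConst (us i) y ∂μ +
          2 * ∫⁻ y in ball x r, edist (us i y) (u y) ∂μ := by
        gcongr
        exact hP.lintegral_edist_setAverage_le_of_locallyLipschitzOnSet (hlip i) hsub hr hB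
    _ ≤ ENNReal.ofReal (CP * r) * ∫⁻ y in ball x ρ, lipConst (us i) y ∂μ +
          2 * ∫⁻ y in closedBall x r, edist (us i y) (u y) ∂μ := by
        gcongr
        exact ball_subset_closedBall

end SupportsPoincare

end Poincare

section VariationMaximal

variable {X : Type*}

/-- The restricted maximal function `M_R V(u,·)(x)` of the variation of `u`. It is not an instance
of `restrMaximal`, as `totVarOn μ u` is a function on open sets rather than a measure. -/
def variationMaximal [PseudoMetricSpace X] [MeasurableSpace X] (μ : Measure X) (u : X → ℝ) (R : ℝ)
    (x : X) : ℝ≥0∞ :=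
  ⨆ (ρ : ℝ) (_ : 0 < ρ) (_ : ρ ≤ R), totVarOn μ u (ball x ρ) / μ (ball x ρ)

theorem IsDoublingWith.totVarOn_ball_le [PseudoMetricSpace X] [MeasurableSpace X] {μ : Measure X}
    {Cd : ℝ≥0} (hD : IsDoublingWith μ Cd) (u : X → ℝ) (x : X) {ρ R : ℝ} (hρ : 0 < ρ)
    (hρR : ρ ≤ R) : totVarOn μ u (ball x ρ) ≤ variationMaximal μ u R x * μ (ball x ρ) :=
  (ENNReal.div_le_iff (hD.measure_ball_pos x hρ).ne' (hD.measure_ball_lt_top x ρ).ne).1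
    (le_iSup_of_le ρ (le_iSup₂_of_le hρ hρR le_rfl))

variable [MetricSpace X] [MeasurableSpace X] {μ : Measure X} {u : X → ℝ} {x : X}

theorem LebesguePointOf.tendsto_setAverage [μ.IsOpenPosMeasure] (hx : LebesguePointOf μ u x)
    (hfin : ∀ r, μ (ball x r) ≠ ⊤) (hu : ∀ r, IntegrableOn u (ball x r) μ) :
    Tendsto (fun r => ⨍ y in ball x r, u y ∂μ) (𝓝[>] 0) (𝓝 (u x)) := by
  rw [tendsto_iff_edist_tendsto_0]
  refine tendsto_of_tendsto_of_tendsto_of_le_of_le' tendsto_const_nhds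
    (by simpa only [ENNReal.ofReal_zero] using ENNReal.tendsto_ofReal hx)
    (Eventually.of_forall fun _ => zero_le) ?_
  filter_upwards [self_mem_nhdsWithin] with r hr
  have hosc : IntegrableOn (fun y => |u y - u x|) (ball x r) μ :=
    ((hu r).sub (integrableOn_const (hfin r))).abs
  rw [ofReal_setAverage hosc (Eventually.of_forall fun _ => abs_nonneg _)]
  simpa only [edist_dist, Real.dist_eq] using
    edist_setAverage_const_le (measure_ball_pos μ x hr).ne' (hfin r) (hu r) (u x)

variable [BorelSpace X] {Cd : ℝ≥0} {CP : ℝ} (hCP : 0 < CP) (hD : IsDoublingWith μ Cd)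
  (hP : SupportsPoincare μ CP)
include hCP hD hP

theorem edist_setAverage_ball_setAverage_ball_le {a : X} {s r ρ R : ℝ} {n : ℕ}
    (hu : IntegrableOn u (ball x r) μ) (hs : 0 < s) (hr : 0 < r)
    (hsr : ball a s ⊆ ball x r) (hrρ : r < ρ) (hρR : ρ ≤ R) (hρs : ball x ρ ⊆ ball a (2 ^ n * s)) :
    edist (⨍ y in ball a s, u y ∂μ) (⨍ y in ball x r, u y ∂μ) ≤
      ENNReal.ofReal (CP * Cd ^ n * r) * variationMaximal μ u R x := by
  have hB : μ (ball x r) ≠ ⊤ := (hD.measure_ball_lt_top x r).ne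
  refine (edist_setAverage_setAverage_le_of_subset hsr (hD.measure_ball_pos a hs).ne' hB hu).trans
    (ENNReal.div_le_of_le_mul ?_)
  calc ∫⁻ y in ball x r, edist (u y) (⨍ z in ball x r, u z ∂μ) ∂μ
      ≤ ENNReal.ofReal (CP * r) * totVarOn μ u (ball x ρ) :=
        hP.lintegral_edist_setAverage_le_totVarOn hCP hr hrρ hB hu
    _ ≤ ENNReal.ofReal (CP * r) * (variationMaximal μ u R x * μ (ball x ρ)) := by
        gcongr
        exact hD.totVarOn_ball_le u x (hr.trans hrρ) hρR
    _ ≤ ENNReal.ofReal (CP * r) * (variationMaximal μ u R x * (Cd ^ n * μ (ball a s))) := by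
        gcongr
        exact (measure_mono hρs).trans (hD.measure_ball_two_pow_mul_le a hs n)
    _ = ENNReal.ofReal (CP * Cd ^ n * r) * variationMaximal μ u R x * μ (ball a s) := by
        rw [mul_right_comm CP, ENNReal.ofReal_mul (p := CP * r) (by positivity),
          ENNReal.ofReal_pow Cd.coe_nonneg, ENNReal.ofReal_coe_nnreal]
        ring

theorem edist_setAverage_ball_le_of_tendsto {a r R : ℝ} (hu : ∀ s, IntegrableOn u (ball x s) μ)
    (ha : Tendsto (fun s => ⨍ y in ball x s, u y ∂μ) (𝓝[>] 0) (𝓝 a)) (hr : 0 < r) (hrR : r < R)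
    (hRr : R ≤ 4 * r) :
    edist (⨍ y in ball x r, u y ∂μ) a ≤
      ENNReal.ofReal (2 * (CP * Cd ^ 3) * r) * variationMaximal μ u R x := by
  have hradii : Tendsto (fun n : ℕ => r / 2 ^ n) atTop (𝓝[>] 0) :=
    tendsto_nhdsWithin_iff.2
      ⟨tendsto_const_nhds.div_atTop (tendsto_pow_atTop_atTop_of_one_lt one_lt_two),
        Eventually.of_forall fun n => by simp only [mem_Ioi]; positivity⟩
  have hstep : ∀ n : ℕ, edist (⨍ y in ball x (r / 2 ^ n), u y ∂μ)
      (⨍ y in ball x (r / 2 ^ (n + 1)), u y ∂μ) ≤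
        ENNReal.ofReal (CP * Cd ^ 3 * r) * variationMaximal μ u R x / 2 ^ n := by
    intro n
    have hR : R / 2 ^ n ≤ 2 ^ 3 * (r / 2 ^ (n + 1)) := by
      calc R / 2 ^ n ≤ 4 * r / 2 ^ n := by gcongr
        _ = 2 ^ 3 * (r / 2 ^ (n + 1)) := by ring
    rw [edist_comm]
    refine (edist_setAverage_ball_setAverage_ball_le hCP hD hP (hu _) (by positivity)
      (by positivity) (ball_subset_ball ?_) (div_lt_div_of_pos_right hrR (by positivity))
      (div_le_self (hr.trans hrR).le (one_le_pow₀ one_le_two)) (ball_subset_ball hR)).trans_eq ?_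
    · gcongr <;> simp
    · rw [← mul_div_assoc, ENNReal.ofReal_div_of_pos (by positivity),
        ENNReal.ofReal_pow zero_le_two, ENNReal.ofReal_ofNat, ENNReal.mul_div_right_comm]
  rw [mul_assoc 2, ENNReal.ofReal_mul zero_le_two, ENNReal.ofReal_ofNat, mul_assoc]
  simpa only [pow_zero, div_one] using
    edist_le_of_edist_le_geometric_two_of_tendsto₀ _ hstep (ha.comp hradii)

theorem edist_le_variationMaximal_add_of_tendsto {y z : X} {a b : ℝ}
    (hu : ∀ x r, IntegrableOn u (ball x r) μ)
    (ha : Tendsto (fun r => ⨍ x in ball y r, u x ∂μ) (𝓝[>] 0) (𝓝 a))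
    (hb : Tendsto (fun r => ⨍ x in ball z r, u x ∂μ) (𝓝[>] 0) (𝓝 b)) :
    edist a b ≤ ENNReal.ofReal (9 / 2 * CP * Cd ^ 3 * dist y z) *
      (variationMaximal μ u (2 * dist y z) y + variationMaximal μ u (2 * dist y z) z) := by
  obtain rfl | hyz := eq_or_ne y z
  · simp only [tendsto_nhds_unique ha hb, edist_self, zero_le]
  have hd : 0 < dist y z := dist_pos.2 hyz
  set d := dist y z with hd_def
  set My := variationMaximal μ u (2 * d) y
  set Mz := variationMaximal μ u (2 * d) z
  set K := CP * Cd ^ 3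
  have hy : edist a (⨍ x in ball y (3 / 2 * d), u x ∂μ) ≤
      ENNReal.ofReal (2 * K * (3 / 2 * d)) * My := by
    rw [edist_comm]
    exact edist_setAverage_ball_le_of_tendsto hCP hD hP (hu y) ha (by positivity) (by linarith)
      (by linarith)
  have hz : edist (⨍ x in ball z (d / 2), u x ∂μ) b ≤ ENNReal.ofReal (2 * K * (d / 2)) * Mz :=
    edist_setAverage_ball_le_of_tendsto hCP hD hP (hu z) hb (by positivity) (by linarith)
      (by linarith)
  have hyz : edist (⨍ x in ball y (3 / 2 * d), u x ∂μ) (⨍ x in ball z (d / 2), u x ∂μ) ≤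
      ENNReal.ofReal (K * (3 / 2 * d)) * My := by
    rw [edist_comm]
    exact edist_setAverage_ball_setAverage_ball_le hCP hD hP (hu y _) (by positivity)
      (by positivity) (ball_subset_ball' (by rw [dist_comm, ← hd_def]; linarith))
      (by linarith) le_rfl (ball_subset_ball' (by rw [← hd_def]; linarith))
  calc edist a b
      ≤ ENNReal.ofReal (2 * K * (3 / 2 * d)) * My + ENNReal.ofReal (K * (3 / 2 * d)) * My +
          ENNReal.ofReal (2 * K * (d / 2)) * Mz :=
        (edist_triangle4 _ _ _ _).trans (add_le_add (add_le_add hy hyz) hz)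
    _ = ENNReal.ofReal (9 / 2 * (K * d)) * My + ENNReal.ofReal (K * d) * Mz := by
        rw [← add_mul, ← ENNReal.ofReal_add (by positivity) (by positivity)]
        ring_nf
    _ ≤ ENNReal.ofReal (9 / 2 * (K * d)) * (My + Mz) := by
        rw [mul_add]
        gcongr ENNReal.ofReal _ * My + ENNReal.ofReal ?_ * Mz
        linarith [show 0 ≤ K * d by positivity]
    _ = ENNReal.ofReal (9 / 2 * CP * Cd ^ 3 * d) * (My + Mz) := by
        rw [mul_assoc (9 / 2), mul_assoc (9 / 2)]

theorem statement18_general {y z : X} (hu : ∀ x r, IntegrableOn u (ball x r) μ)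
    (hy : LebesguePointOf μ u y) (hz : LebesguePointOf μ u z) :
    ENNReal.ofReal |u y - u z| ≤ ENNReal.ofReal (9 / 2 * CP * Cd ^ 3 * dist y z) *
      (variationMaximal μ u (2 * dist y z) y + variationMaximal μ u (2 * dist y z) z) := by
  have := hD.isOpenPosMeasure
  have hB : ∀ x r, μ (ball x r) ≠ ⊤ := fun x r => (hD.measure_ball_lt_top x r).ne
  rw [← Real.dist_eq, ← edist_dist]
  exact edist_le_variationMaximal_add_of_tendsto hCP hD hP hu
    (hy.tendsto_setAverage (hB y) (hu y)) (hz.tendsto_setAverage (hB z) (hu z))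

end VariationMaximal

theorem statement18 (Cd : ℝ≥0) (CP : ℝ) (hCd : 1 ≤ Cd) (hCP : 0 < CP) :
    ∃ C : ℝ, 1 ≤ C ∧
      ∀ (X : Type u) [MetricSpace X] [MeasurableSpace X] [BorelSpace X]
        (μ : Measure X), GoodSpace X μ Cd CP →
        ∀ u : X → ℝ, IsBV μ u →
          ∀ y z : X, LebesguePointOf μ u y → LebesguePointOf μ u z → y ≠ z →
            ENNReal.ofReal |u y - u z| ≤
              ENNReal.ofReal (C * dist y z) *
                ((⨆ (ρ : ℝ) (_ : 0 < ρ) (_ : ρ ≤ 2 * dist y z),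
                    totVarOn μ u (ball y ρ) / μ (ball y ρ)) +
                  (⨆ (ρ : ℝ) (_ : 0 < ρ) (_ : ρ ≤ 2 * dist y z),
                    totVarOn μ u (ball z ρ) / μ (ball z ρ))) := by
  refine ⟨max 1 (9 / 2 * CP * Cd ^ 3), le_max_left _ _, ?_⟩
  intro X _ _ _ μ ⟨_, _, _, hD, hP⟩ u hu y z hy hz _
  have := hD.secondCountableTopology
  refine (statement18_general hCP hD hP
    (fun x r => hu.integrableOn_ball (hD.measure_ball_lt_top x r).ne) hy hz).trans ?_
  gcongr
  exacts [le_max_right _ _, le_rfl, le_rfl]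

end
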